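/- Let 1 ≤ p < ∞ and for each n ∈ ℕ let X^{(n)} be a random vector in B_p^n with directional distribution C_{n,p}, and set R_n = (∏_{i=1}^n |X_i^{(n)}|)^{1/n} / ((1/n) ∑_{i=1}^n |X_i^{(n)}|^p)^{1/p}. Then for every θ ∈ (e^{m_p}, 1), lim_{n→∞} (1/n) log P(R_n > θ) = −I_p(θ). -/

import Mathlib

open MeasureTheory ProbabilityTheory Filter Set

noncomputable section

/-- The `ℓ_p`-norm on `ℝ^n`: `‖x‖_p = (∑ |x_i|^p)^{1/p}`. -/
def pNorm (p : ℝ) {n : ℕ} (x : Fin n → ℝ) : ℝ := (∑ i, |x i| ^ p) ^ (1 / p)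

/-- The unit ball `B_p^n = {x : ‖x‖_p ≤ 1}`. -/
def unitBallp (n : ℕ) (p : ℝ) : Set (Fin n → ℝ) := {x | pNorm p x ≤ 1}

/-- The unit sphere `S_p^{n-1} = {x : ‖x‖_p = 1}`. -/
def unitSpherep (n : ℕ) (p : ℝ) : Set (Fin n → ℝ) := {x | pNorm p x = 1}

/-- The cone spanned by a set: `{r x : r ∈ [0,1], x ∈ A}`. -/
def coneOf {n : ℕ} (A : Set (Fin n → ℝ)) : Set (Fin n → ℝ) :=
  {y | ∃ r ∈ Icc (0:ℝ) 1, ∃ x ∈ A, y = r • x}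

/-- `C` is the cone probability measure `C_{n,p}` on `S_p^{n-1}`: the probability measure
concentrated on the sphere with `C(A) = vol_n({r x : r ∈ [0,1], x ∈ A})/vol_n(B_p^n)` for
measurable `A ⊆ S_p^{n-1}`. -/
def IsConeMeasure (n : ℕ) (p : ℝ) (C : Measure (Fin n → ℝ)) : Prop :=
  IsProbabilityMeasure C ∧ C (unitSpherep n p)ᶜ = 0 ∧
    ∀ A : Set (Fin n → ℝ), MeasurableSet A → A ⊆ unitSpherep n p →
      C A = volume (coneOf A) / volume (unitBallp n p)

/-- A random vector `X` (on the probability space `(Ω, P)`) has directional distribution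
`C_{n,p}`: it equals in distribution `R • Z`, where `Z ∼ C_{n,p}` and `R` is an independent
random variable with values in `[0,1]` whose law has no atom at `0`.  Independence of `R`
and `Z` is encoded by taking the joint law to be the product measure `μ_R ⊗ C_{n,p}`. -/
def HasConeDirDist (n : ℕ) (p : ℝ) {Ω : Type*} [MeasurableSpace Ω] (P : Measure Ω)
    (X : Ω → Fin n → ℝ) : Prop :=
  ∃ (μR : Measure ℝ) (C : Measure (Fin n → ℝ)),
    IsProbabilityMeasure μR ∧ μR (Icc (0:ℝ) 1)ᶜ = 0 ∧ μR {0} = 0 ∧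
    IsConeMeasure n p C ∧
    Measure.map X P = Measure.map (fun rz : ℝ × (Fin n → ℝ) => rz.1 • rz.2) (μR.prod C)

/-- The digamma function `ψ = Γ'/Γ`. -/
def digammaFn (x : ℝ) : ℝ := deriv Real.Gamma x / Real.Gamma x

/-- `H(x) = ψ(x) - log x`. -/
def Hfun (x : ℝ) : ℝ := digammaFn x - Real.log x

/-- The inverse `H⁻¹` of the increasing bijection `H : (0,∞) → (-∞,0)`. -/
def Hinv (y : ℝ) : ℝ := Function.invFunOn Hfun (Ioi 0) y

/-- The constant `m_p = (1/p)(ψ(1/p) + log p)`. -/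
def mConst (p : ℝ) : ℝ := (1/p) * (digammaFn (1/p) + Real.log p)

/-- `G_p(θ) = H⁻¹(p log θ)`. -/
def Gfun (p θ : ℝ) : ℝ := Hinv (p * Real.log θ)

/-- The rate function
`I_p(θ) = [p G_p(θ) - 1] log θ + G_p(θ)[log G_p(θ) - 1] - log Γ(G_p(θ))
            + (1/p)(1 + log p) + log Γ(1/p)`. -/
def ratefn (p θ : ℝ) : ℝ :=
  (p * Gfun p θ - 1) * Real.log θ + Gfun p θ * (Real.log (Gfun p θ) - 1)
    - Real.log (Real.Gamma (Gfun p θ)) + (1/p) * (1 + Real.log p)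
    + Real.log (Real.Gamma (1/p))

/-- The ratio of the two sides of the `p`-generalized AGM inequality:
`R_n = (∏ |x_i|)^{1/n} / ((1/n) ∑ |x_i|^p)^{1/p}`. -/
def ratioAGM (p : ℝ) {n : ℕ} (x : Fin n → ℝ) : ℝ :=
  (∏ i, |x i|) ^ ((1:ℝ)/n) / ((1/(n:ℝ)) * ∑ i, |x i| ^ p) ^ (1/p)

/-!
Since `R_n` is invariant under positive scaling, its law is the same for every vector with
directional distribution `C_{n,p}`, in particular for the uniform distribution on `B_p^n`.
Integrating `∏ |x_i| ^ s * exp (-∑ |x_i| ^ p)` once coordinatewise and once along rays expresses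
the moments of order `n s` of `R_n` under that distribution through Gamma values. With
`E x = log Γ(x) - (x log x - x)`, which is `o(x)` by Stirling, the moments grow like
`exp (n (E ((s + 1) / p) - E (1 / p)))`. Since `E' = H` is strictly increasing, this exponent is
strictly convex in `s` and has slope `log θ` at `s = p G_p(θ) - 1`, where the Gärtner–Ellis argument
gives the tail with rate the Legendre transform, which is `I_p(θ)`.
-/

section Digamma

lemma hasDerivAt_log_Gamma {x : ℝ} (hx : 0 < x) :
    HasDerivAt (fun y => Real.log (Real.Gamma y)) (digammaFn x) x :=
  (Real.differentiableOn_Gamma_Ioi.differentiableAt (Ioi_mem_nhds hx)).hasDerivAt.log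
    (Real.Gamma_pos_of_pos hx).ne'

lemma log_Gamma_add_one {x : ℝ} (hx : 0 < x) :
    Real.log (Real.Gamma (x + 1)) = Real.log (Real.Gamma x) + Real.log x := by
  rw [Real.Gamma_add_one hx.ne', Real.log_mul hx.ne' (Real.Gamma_pos_of_pos hx).ne', add_comm]

lemma digammaFn_add_one {x : ℝ} (hx : 0 < x) : digammaFn (x + 1) = digammaFn x + x⁻¹ := by
  have hshift : HasDerivAt (fun y => Real.log (Real.Gamma (y + 1))) (digammaFn (x + 1)) x :=
    (hasDerivAt_log_Gamma (by positivity)).comp_add_const x 1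
  refine hshift.unique <|
    ((hasDerivAt_log_Gamma hx).add (Real.hasDerivAt_log hx.ne')).congr_of_eventuallyEq ?_
  filter_upwards [lt_mem_nhds hx] with y hy using log_Gamma_add_one hy

lemma slope_log_Gamma_add_one {x : ℝ} (hx : 0 < x) :
    slope (Real.log ∘ Real.Gamma) x (x + 1) = Real.log x := by
  simp [slope_def_field, log_Gamma_add_one hx]

lemma Hfun_nonpos {x : ℝ} (hx : 0 < x) : Hfun x ≤ 0 := by
  have hslope := Real.convexOn_log_Gamma.le_slope_of_hasDerivAt (y := x + 1) hx
    (by positivity : 0 < x + 1) (lt_add_one x) (hasDerivAt_log_Gamma hx)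
  rw [slope_log_Gamma_add_one hx] at hslope
  exact sub_nonpos.2 hslope

lemma neg_inv_le_Hfun {x : ℝ} (hx : 0 < x) : -x⁻¹ ≤ Hfun x := by
  have hx1 : 0 < x + 1 := by positivity
  have hslope := Real.convexOn_log_Gamma.slope_le_of_hasDerivAt hx hx1 (lt_add_one x)
    (hasDerivAt_log_Gamma hx1)
  rw [slope_log_Gamma_add_one hx, digammaFn_add_one hx] at hslope
  rw [Hfun]
  linarith

lemma tendsto_Hfun_atTop : Tendsto Hfun atTop (nhds 0) := by
  have hlower : Tendsto (fun x : ℝ => -x⁻¹) atTop (nhds 0) := by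
    simpa using (tendsto_inv_atTop_zero (𝕜 := ℝ)).neg
  refine tendsto_of_tendsto_of_tendsto_of_le_of_le' hlower tendsto_const_nhds ?_ ?_ <;>
    filter_upwards [eventually_gt_atTop 0] with x hx
  exacts [neg_inv_le_Hfun hx, Hfun_nonpos hx]

/-- The increment `H (x + 1) - H x = 1/x - log (1 + 1/x)` of the function `H`. -/
def HfunIncrement (x : ℝ) : ℝ := x⁻¹ - Real.log (1 + x⁻¹)

lemma Hfun_add_one_sub {x : ℝ} (hx : 0 < x) : Hfun (x + 1) - Hfun x = HfunIncrement x := by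
  have hlog : Real.log (1 + x⁻¹) = Real.log (x + 1) - Real.log x := by
    rw [← Real.log_div (by positivity) hx.ne', add_div, div_self hx.ne', one_div]
  rw [Hfun, Hfun, HfunIncrement, digammaFn_add_one hx, hlog]
  ring

lemma HfunIncrement_nonneg {x : ℝ} (hx : 0 < x) : 0 ≤ HfunIncrement x := by
  have hlog := Real.log_le_sub_one_of_pos (by positivity : 0 < 1 + x⁻¹)
  rw [HfunIncrement]
  linarith

lemma strictAntiOn_HfunIncrement : StrictAntiOn HfunIncrement (Ioi 0) := by
  intro x (hx : 0 < x) y (hy : 0 < y) hxy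
  have hinv : y⁻¹ < x⁻¹ := inv_strictAnti₀ hx hxy
  have hy1 : 1 < 1 + y⁻¹ := by simpa using hy
  have hratio : (1 + x⁻¹) / (1 + y⁻¹) - 1 = (x⁻¹ - y⁻¹) / (1 + y⁻¹) := by
    field_simp
    ring
  have hlog : Real.log (1 + x⁻¹) - Real.log (1 + y⁻¹) < x⁻¹ - y⁻¹ := calc
    _ = Real.log ((1 + x⁻¹) / (1 + y⁻¹)) := (Real.log_div (by positivity) (by positivity)).symm
    _ ≤ (x⁻¹ - y⁻¹) / (1 + y⁻¹) := hratio ▸ Real.log_le_sub_one_of_pos (by positivity)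
    _ < x⁻¹ - y⁻¹ := div_lt_self (sub_pos.2 hinv) hy1
  rw [HfunIncrement, HfunIncrement]
  linarith

lemma hasSum_HfunIncrement {x : ℝ} (hx : 0 < x) :
    HasSum (fun k : ℕ => HfunIncrement (x + k)) (-Hfun x) := by
  have hpartial (n : ℕ) :
      ∑ k ∈ Finset.range n, HfunIncrement (x + k) = Hfun (x + n) - Hfun x := by
    have htelescope := Finset.sum_range_sub (fun k : ℕ => Hfun (x + k)) n
    simp only [Nat.cast_add, Nat.cast_one, ← add_assoc, Nat.cast_zero, add_zero] at htelescope
    rw [← htelescope]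
    exact Finset.sum_congr rfl fun k _ => (Hfun_add_one_sub (by positivity)).symm
  rw [hasSum_iff_tendsto_nat_of_nonneg fun k => HfunIncrement_nonneg (by positivity)]
  simp only [hpartial]
  simpa using (tendsto_Hfun_atTop.comp <|
    tendsto_atTop_add_const_left _ x tendsto_natCast_atTop_atTop).sub_const (Hfun x)

lemma strictMonoOn_Hfun : StrictMonoOn Hfun (Ioi 0) := by
  intro x (hx : 0 < x) y (hy : 0 < y) hxy
  have hlt (k : ℕ) : HfunIncrement (y + k) < HfunIncrement (x + k) :=
    strictAntiOn_HfunIncrement (by positivity : 0 < x + k) (by positivity : 0 < y + k) (by gcongr)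
  exact neg_lt_neg_iff.1 <| hasSum_lt (fun k => (hlt k).le) (hlt 0)
    (hasSum_HfunIncrement hy) (hasSum_HfunIncrement hx)

end Digamma

section Stirling

/-- The error `log Γ(x) - (x log x - x)` of the leading-order Stirling approximation. It is the
antiderivative of `H`, and both the limiting moments of `R_n` and the rate function are affine
expressions in its values. -/
def stirlingRemainder (x : ℝ) : ℝ := Real.log (Real.Gamma x) - (x * Real.log x - x)

lemma log_Gamma_mul {a x : ℝ} (ha : a ≠ 0) (hx : x ≠ 0) :
    Real.log (Real.Gamma (a * x)) = stirlingRemainder (a * x)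
      + a * (Real.log (Real.Gamma x) - stirlingRemainder x) + a * x * Real.log a := by
  rw [stirlingRemainder, stirlingRemainder, Real.log_mul ha hx]
  ring

lemma hasDerivAt_stirlingRemainder {x : ℝ} (hx : 0 < x) :
    HasDerivAt stirlingRemainder (Hfun x) x := by
  refine ((hasDerivAt_log_Gamma hx).sub
    ((Real.hasDerivAt_mul_log hx.ne').sub (hasDerivAt_id x))).congr_deriv ?_
  rw [Hfun]
  ring

lemma continuousOn_stirlingRemainder : ContinuousOn stirlingRemainder (Ioi 0) :=
  fun _ hx => (hasDerivAt_stirlingRemainder hx).continuousAt.continuousWithinAt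

lemma stirlingRemainder_one : stirlingRemainder 1 = 1 := by
  simp [stirlingRemainder]

lemma strictConvexOn_stirlingRemainder : StrictConvexOn ℝ (Ioi 0) stirlingRemainder := by
  refine StrictMonoOn.strictConvexOn_of_deriv (convex_Ioi 0) continuousOn_stirlingRemainder ?_
  rw [interior_Ioi]
  exact strictMonoOn_Hfun.congr fun x hx => (hasDerivAt_stirlingRemainder hx).deriv.symm

lemma stirlingRemainder_add_mul_lt {x y : ℝ} (hx : 0 < x) (hxy : x < y) :
    stirlingRemainder x + Hfun x * (y - x) < stirlingRemainder y := by
  have hslope := strictConvexOn_stirlingRemainder.lt_slope_of_hasDerivAt hx (hx.trans hxy) hxy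
    (hasDerivAt_stirlingRemainder hx)
  rw [slope_def_field, lt_div_iff₀ (sub_pos.2 hxy)] at hslope
  linarith

lemma antitoneOn_stirlingRemainder : AntitoneOn stirlingRemainder (Ioi 0) := by
  refine antitoneOn_of_hasDerivWithinAt_nonpos (convex_Ioi 0) continuousOn_stirlingRemainder
    (f' := Hfun) ?_ ?_ <;> rw [interior_Ioi]
  exacts [fun x hx => (hasDerivAt_stirlingRemainder hx).hasDerivWithinAt,
    fun x hx => Hfun_nonpos hx]

lemma monotoneOn_stirlingRemainder_add_log :
    MonotoneOn (fun x => stirlingRemainder x + Real.log x) (Ioi 0) := by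
  have hderiv (x : ℝ) (hx : 0 < x) :
      HasDerivAt (fun x => stirlingRemainder x + Real.log x) (Hfun x + x⁻¹) x :=
    (hasDerivAt_stirlingRemainder hx).add (Real.hasDerivAt_log hx.ne')
  refine monotoneOn_of_hasDerivWithinAt_nonneg (convex_Ioi 0)
    (fun x hx => (hderiv x hx).continuousAt.continuousWithinAt) (f' := fun x => Hfun x + x⁻¹) ?_ ?_
    <;> rw [interior_Ioi] <;> intro x hx
  · exact (hderiv x hx).hasDerivWithinAt
  · linarith [neg_inv_le_Hfun hx]

lemma tendsto_stirlingRemainder_div_atTop :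
    Tendsto (fun x => stirlingRemainder x / x) atTop (nhds 0) := by
  have hupper : Tendsto (fun x : ℝ => 1 / x) atTop (nhds 0) := by
    simpa using tendsto_inv_atTop_zero (𝕜 := ℝ)
  have hlower : Tendsto (fun x : ℝ => (1 - Real.log x) / x) atTop (nhds 0) := by
    simpa [sub_div] using hupper.sub Real.isLittleO_log_id_atTop.tendsto_div_nhds_zero
  refine tendsto_of_tendsto_of_tendsto_of_le_of_le' hlower hupper ?_ ?_ <;>
    filter_upwards [eventually_ge_atTop 1] with x hx <;>
    have hx0 : 0 < x := one_pos.trans_le hx <;> gcongr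
  · have h := monotoneOn_stirlingRemainder_add_log (mem_Ioi.2 one_pos) hx0 hx
    simp only [stirlingRemainder_one, Real.log_one, add_zero] at h
    linarith
  · exact stirlingRemainder_one ▸ antitoneOn_stirlingRemainder (mem_Ioi.2 one_pos) hx0 hx

/-- As the derivative of `stirlingRemainder`, `H` has the intermediate value property, so that
`Hinv` is a genuine inverse on `(H a, 0)`. -/
lemma lt_Hinv_and_Hfun_Hinv_eq {a t : ℝ} (ha : 0 < a) (hat : Hfun a < t) (ht : t < 0) :
    a < Hinv t ∧ Hfun (Hinv t) = t := by
  obtain ⟨b, htb, hab⟩ :=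
    ((tendsto_Hfun_atTop.eventually (lt_mem_nhds ht)).and (eventually_gt_atTop a)).exists
  obtain ⟨c, hc, hct⟩ : t ∈ Hfun '' Ioo a b :=
    exists_hasDerivWithinAt_eq_of_gt_of_lt hab.le
      (fun x hx => (hasDerivAt_stirlingRemainder (ha.trans_le hx.1)).hasDerivWithinAt) hat htb
  have hattained : ∃ x ∈ Ioi (0 : ℝ), Hfun x = t := ⟨c, ha.trans hc.1, hct⟩
  have hmem : Hinv t ∈ Ioi (0 : ℝ) := Function.invFunOn_mem hattained
  have heq : Hfun (Hinv t) = t := Function.invFunOn_eq hattained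
  exact ⟨(strictMonoOn_Hfun.lt_iff_lt ha hmem).1 (by rwa [heq]), heq⟩

end Stirling

section GartnerEllis

variable {ι : Type*} {l : Filter ι}

/-- The exponential rate `x` of the quantities `m` at speed `a`: eventually `m i > 0`, and
`m i = exp (a i * (x + o(1)))` along `l`. Positivity is required explicitly because
`Real.log` is not informative at nonpositive arguments. -/
def HasExpRate (l : Filter ι) (a m : ι → ℝ) (x : ℝ) : Prop :=
  (∀ᶠ i in l, 0 < m i) ∧ Tendsto (fun i => (a i)⁻¹ * Real.log (m i)) l (nhds x)

lemma HasExpRate.eventually_le_exp {a m : ι → ℝ} {x y : ℝ} (hm : HasExpRate l a m x)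
    (ha : Tendsto a l atTop) (hxy : x < y) : ∀ᶠ i in l, m i ≤ Real.exp (a i * y) := by
  filter_upwards [hm.1, ha.eventually_gt_atTop 0, hm.2.eventually (gt_mem_nhds hxy)]
    with i hmi hai hlog
  rw [← Real.log_le_iff_le_exp hmi, ← inv_mul_le_iff₀ hai]
  exact hlog.le

lemma HasExpRate.eventually_const_mul_exp_le {a m : ι → ℝ} {x y : ℝ} (hm : HasExpRate l a m x)
    (ha : Tendsto a l atTop) (hyx : y < x) (C : ℝ) :
    ∀ᶠ i in l, C * Real.exp (a i * y) ≤ m i := by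
  obtain ⟨z, hyz, hzx⟩ := exists_between hyx
  have hgap : Tendsto (fun i => Real.exp (a i * (z - y))) l atTop :=
    Real.tendsto_exp_atTop.comp (ha.atTop_mul_const (sub_pos.2 hyz))
  filter_upwards [hm.1, ha.eventually_gt_atTop 0, hm.2.eventually (lt_mem_nhds hzx),
    hgap.eventually_ge_atTop C] with i hmi hai hlog hC
  calc C * Real.exp (a i * y) ≤ Real.exp (a i * (z - y)) * Real.exp (a i * y) := by gcongr
    _ = Real.exp (a i * z) := by rw [← Real.exp_add]; ring_nf
    _ ≤ m i := by
      rw [← Real.le_log_iff_exp_le hmi, ← le_inv_mul_iff₀ hai]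
      exact hlog.le

lemma hasExpRate_of_eventually_exp_le {a m : ι → ℝ} {x : ℝ} (ha : Tendsto a l atTop)
    (hlower : ∀ y < x, ∀ᶠ i in l, Real.exp (a i * y) ≤ m i)
    (hupper : ∀ y > x, ∀ᶠ i in l, m i ≤ Real.exp (a i * y)) : HasExpRate l a m x := by
  have hpos : ∀ᶠ i in l, 0 < m i := by
    filter_upwards [hlower (x - 1) (sub_one_lt x)] with i hi using (Real.exp_pos _).trans_le hi
  refine ⟨hpos, tendsto_order.2 ⟨fun y hy => ?_, fun y hy => ?_⟩⟩
  · obtain ⟨z, hyz, hzx⟩ := exists_between hy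
    filter_upwards [hpos, ha.eventually_gt_atTop 0, hlower z hzx] with i hmi hai hi
    refine hyz.trans_le ?_
    rwa [le_inv_mul_iff₀ hai, Real.le_log_iff_exp_le hmi]
  · obtain ⟨z, hxz, hzy⟩ := exists_between hy
    filter_upwards [hpos, ha.eventually_gt_atTop 0, hupper z hxz] with i hmi hai hi
    refine lt_of_le_of_lt ?_ hzy
    rwa [inv_mul_le_iff₀ hai, Real.log_le_iff_le_exp hmi]

lemma rpow_le_tilted_add_ite {θ η r u₀ u u₁ : ℝ} (hθ : 0 ≤ θ) (hη : 0 < η) (hr : 0 ≤ r)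
    (hu : 0 < u) (hu₀ : u₀ ≤ u) (hu₁ : u ≤ u₁) :
    r ^ u ≤ θ ^ (u - u₀) * r ^ u₀ + η ^ (u - u₁) * r ^ u₁ + if θ < r then η ^ u else 0 := by
  rcases hr.eq_or_lt with rfl | hr
  · rw [Real.zero_rpow hu.ne']
    positivity
  have hsplit (v : ℝ) : r ^ u = r ^ (u - v) * r ^ v := by rw [← Real.rpow_add hr, sub_add_cancel]
  have h₀ : 0 ≤ θ ^ (u - u₀) * r ^ u₀ := by positivity
  have h₁ : 0 ≤ η ^ (u - u₁) * r ^ u₁ := by positivity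
  have hη_pow : 0 ≤ η ^ u := by positivity
  rcases le_or_gt r θ with hrθ | hθr
  · have hsmall : r ^ u ≤ θ ^ (u - u₀) * r ^ u₀ := by
      rw [hsplit u₀]
      gcongr
    rw [if_neg hrθ.not_gt]
    linarith
  rw [if_pos hθr]
  rcases le_or_gt r η with hrη | hηr
  · have hmiddle : r ^ u ≤ η ^ u := by gcongr
    linarith
  · have hlarge : r ^ u ≤ η ^ (u - u₁) * r ^ u₁ := by
      rw [hsplit u₁]
      gcongr ?_ * _
      exact Real.rpow_le_rpow_of_nonpos hη hηr.le (sub_nonpos.2 hu₁)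
    linarith

section Moments

variable {α : Type*} [MeasurableSpace α] {Q : Measure α} [IsFiniteMeasure Q] {R : α → ℝ}

lemma integral_rpow_le_tilted_add_measureReal (hRm : Measurable R) (hR : ∀ x, 0 ≤ R x)
    {θ η u₀ u u₁ : ℝ} (hθ : 0 ≤ θ) (hη : 0 < η) (hu : 0 < u) (hu₀ : u₀ ≤ u) (hu₁ : u ≤ u₁)
    (hint₀ : Integrable (fun x => R x ^ u₀) Q) (hint₁ : Integrable (fun x => R x ^ u₁) Q) :
    ∫ x, R x ^ u ∂Q ≤ θ ^ (u - u₀) * ∫ x, R x ^ u₀ ∂Q + η ^ (u - u₁) * ∫ x, R x ^ u₁ ∂Q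
      + η ^ u * Q.real {x | θ < R x} := by
  have htail : MeasurableSet {x | θ < R x} := measurableSet_lt measurable_const hRm
  have hint : Integrable ({x | θ < R x}.indicator fun _ => η ^ u) Q :=
    (integrable_const _).indicator htail
  have hint_tilted : Integrable
      (fun x => θ ^ (u - u₀) * R x ^ u₀ + η ^ (u - u₁) * R x ^ u₁) Q :=
    (hint₀.const_mul (θ ^ (u - u₀))).add (hint₁.const_mul (η ^ (u - u₁)))
  calc ∫ x, R x ^ u ∂Q
      ≤ ∫ x, (θ ^ (u - u₀) * R x ^ u₀ + η ^ (u - u₁) * R x ^ u₁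
        + {x | θ < R x}.indicator (fun _ => η ^ u) x) ∂Q := by
        refine integral_mono_of_nonneg (ae_of_all _ fun x => Real.rpow_nonneg (hR x) u)
          (hint_tilted.add hint) (ae_of_all _ fun x => ?_)
        simpa only [indicator_apply, mem_ofPred_eq] using
          rpow_le_tilted_add_ite hθ hη (hR x) hu hu₀ hu₁
    _ = _ := by
        rw [integral_add hint_tilted hint,
          integral_add (hint₀.const_mul _) (hint₁.const_mul _), integral_const_mul,
          integral_const_mul, integral_indicator_const _ htail, smul_eq_mul, mul_comm (η ^ u)]

lemma rpow_mul_measureReal_le_integral_rpow (hR : ∀ x, 0 ≤ R x) {θ u : ℝ} (hθ : 0 ≤ θ)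
    (hu : 0 ≤ u) (hint : Integrable (fun x => R x ^ u) Q) :
    θ ^ u * Q.real {x | θ < R x} ≤ ∫ x, R x ^ u ∂Q := by
  have hsub : {x | θ < R x} ⊆ {x | θ ^ u ≤ R x ^ u} := fun x (hx : θ < R x) =>
    Real.rpow_le_rpow hθ hx.le hu
  calc θ ^ u * Q.real {x | θ < R x} ≤ θ ^ u * Q.real {x | θ ^ u ≤ R x ^ u} := by
        grw [measureReal_mono hsub]
    _ ≤ ∫ x, R x ^ u ∂Q := mul_meas_ge_le_integral_of_nonneg
        (ae_of_all _ fun x => Real.rpow_nonneg (hR x) u) hint (θ ^ u)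

end Moments

lemma exists_lt_lt_of_exposed {Λ : ℝ → ℝ} {D s₀ b : ℝ} (hΛ : HasDerivAt Λ D s₀) (hs₀ : 0 < s₀)
    (hb : b < Λ s₀ - s₀ * D) :
    ∃ c s t, s₀ < s ∧ s < t ∧ Λ t - (t - s) * c < Λ s ∧ b + s * c < Λ s := by
  obtain ⟨c, hDc, hcb⟩ : ∃ c, D < c ∧ c < (Λ s₀ - b) / s₀ :=
    exists_between (by rw [lt_div_iff₀ hs₀]; linarith)
  rw [lt_div_iff₀ hs₀] at hcb
  obtain ⟨t, hst, hslope⟩ : ∃ t, s₀ < t ∧ slope Λ s₀ t < c := by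
    have hright := (hasDerivAt_iff_tendsto_slope.1 hΛ).mono_left
      (nhdsWithin_mono s₀ fun x (hx : s₀ < x) => hx.ne')
    have hmem : ∀ᶠ t in nhdsWithin s₀ (Ioi s₀), s₀ < t := eventually_mem_nhdsWithin
    exact (hmem.and (hright.eventually (gt_mem_nhds hDc))).exists
  rw [slope_def_field, div_lt_iff₀ (sub_pos.2 hst)] at hslope
  have hcont : ContinuousAt Λ s₀ := hΛ.continuousAt
  have htilt : ∀ᶠ s in nhds s₀, Λ t - (t - s) * c < Λ s :=
    ContinuousAt.eventually_lt (by fun_prop) hcont (by linarith)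
  have hrate : ∀ᶠ s in nhds s₀, b + s * c < Λ s :=
    ContinuousAt.eventually_lt (by fun_prop) hcont (by linarith)
  have hnear := ((htilt.and hrate).and (gt_mem_nhds hst)).filter_mono
    (nhdsWithin_le_nhds (s := Ioi s₀))
  obtain ⟨s, hs₀s, ⟨hs, hsc⟩, hs_t⟩ := (eventually_mem_nhdsWithin.and hnear).exists
  exact ⟨c, s, t, hs₀s, hs_t, hs, hsc⟩

variable {a : ι → ℝ} {α : ι → Type*} [∀ i, MeasurableSpace (α i)] {Q : ∀ i, Measure (α i)}
  [∀ i, IsFiniteMeasure (Q i)] {R : ∀ i, α i → ℝ}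

/-- Under the law tilted by `R ^ (a s)`, both `{R ≤ θ}` and `{R > exp c}` are exponentially
negligible, because of the moments of orders `s₀ < s` and `t > s`. -/
lemma eventually_exp_le_measureReal_of_tilt (ha : Tendsto a l atTop)
    (hRm : ∀ i, Measurable (R i)) (hR : ∀ i x, 0 ≤ R i x) {θ c b s₀ s t L₀ L L₁ : ℝ}
    (hθ : 0 < θ) (hs : 0 < s) (hs₀s : s₀ ≤ s) (hst : s ≤ t)
    (hL₀ : HasExpRate l a (fun i => ∫ x, R i x ^ (a i * s₀) ∂Q i) L₀)
    (hL : HasExpRate l a (fun i => ∫ x, R i x ^ (a i * s) ∂Q i) L)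
    (hL₁ : HasExpRate l a (fun i => ∫ x, R i x ^ (a i * t) ∂Q i) L₁)
    (hsmall : L₀ + (s - s₀) * Real.log θ < L) (hlarge : L₁ - (t - s) * c < L)
    (hb : b + s * c < L) :
    ∀ᶠ i in l, Real.exp (a i * b) ≤ (Q i).real {x | θ < R i x} := by
  obtain ⟨y, hy, hyL⟩ := exists_between (max_lt (max_lt hsmall hlarge) hb)
  simp only [max_lt_iff] at hy
  obtain ⟨⟨hy₀, hy₁⟩, hyb⟩ := hy
  filter_upwards [ha.eventually_gt_atTop 0, hL₀.1, hL₁.1,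
    hL₀.eventually_le_exp ha (by linarith : L₀ < y - (s - s₀) * Real.log θ),
    hL₁.eventually_le_exp ha (by linarith : L₁ < y + (t - s) * c),
    hL.eventually_const_mul_exp_le ha hyL 3] with i hai hpos₀ hpos₁ hM₀ hM₁ hM
  have htilt := integral_rpow_le_tilted_add_measureReal (hRm i) (hR i) hθ.le (Real.exp_pos c)
    (mul_pos hai hs) (by gcongr) (by gcongr) (Integrable.of_integral_ne_zero hpos₀.ne')
    (Integrable.of_integral_ne_zero hpos₁.ne')
  rw [Real.rpow_def_of_pos hθ] at htilt
  simp only [← Real.exp_mul] at htilt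
  have hpiece₀ : Real.exp (Real.log θ * (a i * s - a i * s₀)) * ∫ x, R i x ^ (a i * s₀) ∂Q i
      ≤ Real.exp (a i * y) := by
    grw [hM₀, ← Real.exp_add]
    ring_nf
    rfl
  have hpiece₁ : Real.exp (c * (a i * s - a i * t)) * ∫ x, R i x ^ (a i * t) ∂Q i
      ≤ Real.exp (a i * y) := by
    grw [hM₁, ← Real.exp_add]
    ring_nf
    rfl
  have hbulk : Real.exp (c * (a i * s)) * Real.exp (a i * b)
      ≤ Real.exp (c * (a i * s)) * (Q i).real {x | θ < R i x} := calc
    _ = Real.exp (a i * (b + s * c)) := by rw [← Real.exp_add]; ring_nf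
    _ ≤ Real.exp (a i * y) := by gcongr
    _ ≤ _ := by linarith
  exact le_of_mul_le_mul_left hbulk (Real.exp_pos _)

lemma eventually_measureReal_le_exp (ha : Tendsto a l atTop) (hR : ∀ i x, 0 ≤ R i x)
    {θ b s L : ℝ} (hθ : 0 < θ) (hs : 0 ≤ s)
    (hL : HasExpRate l a (fun i => ∫ x, R i x ^ (a i * s) ∂Q i) L)
    (hb : L - s * Real.log θ < b) :
    ∀ᶠ i in l, (Q i).real {x | θ < R i x} ≤ Real.exp (a i * b) := by
  filter_upwards [ha.eventually_gt_atTop 0, hL.1,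
    hL.eventually_le_exp ha (by linarith : L < b + s * Real.log θ)] with i hai hpos hM
  have hmarkov := (rpow_mul_measureReal_le_integral_rpow (hR i) hθ.le (mul_nonneg hai.le hs)
    (Integrable.of_integral_ne_zero hpos.ne')).trans hM
  rw [mul_add, Real.exp_add, mul_comm (Real.exp _)] at hmarkov
  refine le_of_mul_le_mul_left (hmarkov.trans_eq ?_) (Real.rpow_pos_of_pos hθ _)
  rw [Real.rpow_def_of_pos hθ]
  ring_nf

/-- The upper-tail part of the Gärtner–Ellis theorem at a point `s₀` at which `Λ` is exposed
from the right. -/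
theorem hasExpRate_measureReal_lt (ha : Tendsto a l atTop)
    (hRm : ∀ i, Measurable (R i)) (hR : ∀ i x, 0 ≤ R i x) {Λ : ℝ → ℝ} {θ s₀ : ℝ} (hθ : 0 < θ)
    (hs₀ : 0 < s₀)
    (hmom : ∀ s ≥ s₀, HasExpRate l a (fun i => ∫ x, R i x ^ (a i * s) ∂Q i) (Λ s))
    (hΛ : HasDerivAt Λ (Real.log θ) s₀)
    (hexposed : ∀ s > s₀, Λ s₀ + (s - s₀) * Real.log θ < Λ s) :
    HasExpRate l a (fun i => (Q i).real {x | θ < R i x}) (Λ s₀ - s₀ * Real.log θ) := by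
  refine hasExpRate_of_eventually_exp_le ha (fun b hb => ?_) fun b hb =>
    eventually_measureReal_le_exp ha hR hθ hs₀.le (hmom s₀ le_rfl) hb
  obtain ⟨c, s, t, hs, hst, hlarge, hbc⟩ := exists_lt_lt_of_exposed hΛ hs₀ hb
  exact eventually_exp_le_measureReal_of_tilt ha hRm hR hθ (hs₀.trans hs) hs.le hst.le
    (hmom s₀ le_rfl) (hmom s hs.le) (hmom t (hs.trans hst).le) (hexposed s hs) hlarge hbc

end GartnerEllis

section Radial

variable {E : Type*} [NormedAddCommGroup E] [NormedSpace ℝ E] [FiniteDimensional ℝ E]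
  [Nontrivial E] [MeasurableSpace E] [BorelSpace E] (μ : Measure E) [μ.IsAddHaarMeasure]

lemma lintegral_volumeIoiPow (k : ℕ) (φ : ℝ → ENNReal) :
    ∫⁻ r : Ioi (0 : ℝ), φ r ∂Measure.volumeIoiPow k
      = ∫⁻ r in Ioi (0 : ℝ), ENNReal.ofReal (r ^ k) * φ r := by
  rw [Measure.volumeIoiPow, lintegral_withDensity_eq_lintegral_mul_non_measurable _ (by fun_prop)
    (ae_of_all _ fun r => ENNReal.ofReal_lt_top)]
  exact lintegral_subtype_comap measurableSet_Ioi fun r => ENNReal.ofReal (r ^ k) * φ r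

lemma lintegral_eq_lintegral_toSphere_Ioi {f : E → ENNReal} (hf : Measurable f) :
    ∫⁻ x, f x ∂μ = ∫⁻ ω, (∫⁻ r in Ioi (0 : ℝ),
      ENNReal.ofReal (r ^ (Module.finrank ℝ E - 1)) * f (r • (ω : E))) ∂μ.toSphere := by
  have hpolar := μ.measurePreserving_homeomorphUnitSphereProd.symm
    (homeomorphUnitSphereProd E).toMeasurableEquiv
  calc ∫⁻ x, f x ∂μ = ∫⁻ x : ({0}ᶜ : Set E), f x ∂μ.comap (↑) := by
        rw [lintegral_subtype_comap (measurableSet_singleton _).compl f, restrict_compl_singleton]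
    _ = ∫⁻ z, f ((z.2 : ℝ) • (z.1 : E))
          ∂μ.toSphere.prod (Measure.volumeIoiPow (Module.finrank ℝ E - 1)) :=
        (hpolar.lintegral_comp (hf.comp measurable_subtype_coe)).symm
    _ = ∫⁻ ω, (∫⁻ r, f ((r : ℝ) • (ω : E))
          ∂Measure.volumeIoiPow (Module.finrank ℝ E - 1)) ∂μ.toSphere :=
        lintegral_prod _ (by fun_prop)
    _ = _ := lintegral_congr fun ω => lintegral_volumeIoiPow _ fun r => f (r • (ω : E))

lemma lintegral_Ioi_pow_mul_comp_mul_left (k : ℕ) (φ : ℝ → ENNReal) {c : ℝ} (hc : 0 < c) :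
    ∫⁻ r in Ioi (0 : ℝ), ENNReal.ofReal (r ^ k) * φ (c * r)
      = ENNReal.ofReal ((c ^ (k + 1))⁻¹) * ∫⁻ r in Ioi (0 : ℝ), ENNReal.ofReal (r ^ k) * φ r := by
  have himage : (fun r => c * r) '' Ioi (0 : ℝ) = Ioi 0 := by
    simp [image_mul_left_Ioi hc]
  have hsubst := lintegral_image_eq_lintegral_abs_deriv_mul (measurableSet_Ioi (a := 0))
    (fun _ _ => (hasDerivAt_const_mul c).hasDerivWithinAt)
    (mul_right_injective₀ hc.ne').injOn fun r => ENNReal.ofReal (r ^ k) * φ r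
  rw [himage] at hsubst
  rw [hsubst, ← lintegral_const_mul' _ _ ENNReal.ofReal_ne_top]
  refine setLIntegral_congr_fun measurableSet_Ioi fun r _ => ?_
  rw [abs_of_pos hc, ← mul_assoc, ← mul_assoc, ← ENNReal.ofReal_mul (by positivity),
    ← ENNReal.ofReal_mul (by positivity)]
  congr 2
  field_simp
  ring

lemma lintegral_Ioc_pow (k : ℕ) :
    ∫⁻ r in Ioc (0 : ℝ) 1, ENNReal.ofReal (r ^ k) = ((k + 1 : ℕ) : ENNReal)⁻¹ := by
  rw [← ofReal_integral_eq_lintegral_ofReal (continuous_pow k).integrableOn_Ioc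
    (ae_restrict_of_forall_mem measurableSet_Ioc fun r hr => pow_nonneg hr.1.le k),
    ← intervalIntegral.integral_of_le zero_le_one, integral_pow, one_pow,
    zero_pow k.succ_ne_zero, sub_zero, one_div, ENNReal.ofReal_inv_of_pos (by positivity)]
  norm_cast

section Gauge

variable {N : E → ℝ} {h : E → ENNReal} {φ : ℝ → ENNReal}

lemma exists_lintegral_mul_comp_gauge (hN : Measurable N)
    (hN_smul : ∀ r > 0, ∀ x, N (r • x) = r * N x) (hN_pos : ∀ x ≠ 0, 0 < N x)
    (hh : Measurable h) (hh_smul : ∀ r : ℝ, 0 < r → ∀ x, h (r • x) = h x) :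
    ∃ K : ENNReal, ∀ φ : ℝ → ENNReal, Measurable φ → ∫⁻ x, h x * φ (N x) ∂μ
      = K * ∫⁻ r in Ioi (0 : ℝ), ENNReal.ofReal (r ^ (Module.finrank ℝ E - 1)) * φ r := by
  set k := Module.finrank ℝ E - 1
  refine ⟨∫⁻ ω, h (ω : E) * ENNReal.ofReal ((N ω ^ (k + 1))⁻¹) ∂μ.toSphere, fun φ hφ => ?_⟩
  rw [lintegral_eq_lintegral_toSphere_Ioi μ (by fun_prop), ← lintegral_mul_const _ (by fun_prop)]
  refine lintegral_congr fun ω => ?_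
  have hω : 0 < N ω := hN_pos _ (ne_zero_of_mem_unit_sphere ω)
  rw [mul_assoc, ← lintegral_Ioi_pow_mul_comp_mul_left k φ hω,
    ← lintegral_const_mul _ (by fun_prop)]
  refine setLIntegral_congr_fun measurableSet_Ioi fun r hr => ?_
  rw [hN_smul r hr, hh_smul r hr, mul_comm r, mul_left_comm]

lemma lintegral_mul_comp_gauge (hN : Measurable N)
    (hN_smul : ∀ r > 0, ∀ x, N (r • x) = r * N x) (hN_pos : ∀ x ≠ 0, 0 < N x)
    (hh : Measurable h) (hh_smul : ∀ r : ℝ, 0 < r → ∀ x, h (r • x) = h x) (hφ : Measurable φ) :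
    ∫⁻ x, h x * φ (N x) ∂μ = (Module.finrank ℝ E * ∫⁻ x in {x | N x ≤ 1}, h x ∂μ)
      * ∫⁻ r in Ioi (0 : ℝ), ENNReal.ofReal (r ^ (Module.finrank ℝ E - 1)) * φ r := by
  obtain ⟨K, hK⟩ := exists_lintegral_mul_comp_gauge μ hN hN_smul hN_pos hh hh_smul
  have hdim : Module.finrank ℝ E - 1 + 1 = Module.finrank ℝ E :=
    Nat.sub_add_cancel Module.finrank_pos
  have hball : ∫⁻ x in {x | N x ≤ 1}, h x ∂μ = K * (Module.finrank ℝ E : ENNReal)⁻¹ := calc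
    _ = ∫⁻ x, h x * (Iic (1 : ℝ)).indicator 1 (N x) ∂μ := by
      rw [← lintegral_indicator (measurableSet_le hN measurable_const)]
      refine lintegral_congr fun x => ?_
      by_cases hx : N x ≤ 1 <;> simp [hx]
    _ = K * ∫⁻ r in Ioc (0 : ℝ) 1, ENNReal.ofReal (r ^ (Module.finrank ℝ E - 1)) := by
      rw [hK _ (measurable_one.indicator measurableSet_Iic), ← Ioi_inter_Iic, inter_comm,
        ← setLIntegral_indicator measurableSet_Iic]
      congr 1
      refine lintegral_congr fun r => ?_
      by_cases hr : r ≤ 1 <;> simp [hr]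
    _ = _ := by rw [lintegral_Ioc_pow, hdim]
  have hdim_ne : (Module.finrank ℝ E : ENNReal) ≠ 0 := by
    exact_mod_cast Module.finrank_pos.ne'
  rw [hball, mul_left_comm, ENNReal.mul_inv_cancel hdim_ne (ENNReal.natCast_ne_top _), mul_one,
    hK φ hφ]

end Gauge

end Radial

section PNorm

variable {p : ℝ} {n : ℕ}

lemma sum_abs_rpow_nonneg (p : ℝ) (x : Fin n → ℝ) : 0 ≤ ∑ i, |x i| ^ p := by
  positivity

lemma pNorm_nonneg (p : ℝ) (x : Fin n → ℝ) : 0 ≤ pNorm p x :=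
  Real.rpow_nonneg (sum_abs_rpow_nonneg p x) _

@[fun_prop]
lemma measurable_pNorm (p : ℝ) : Measurable (pNorm p : (Fin n → ℝ) → ℝ) := by
  unfold pNorm
  fun_prop

lemma pNorm_rpow (hp : p ≠ 0) (x : Fin n → ℝ) : pNorm p x ^ p = ∑ i, |x i| ^ p := by
  rw [pNorm, one_div, Real.rpow_inv_rpow (sum_abs_rpow_nonneg p x) hp]

lemma pNorm_smul (hp : p ≠ 0) {r : ℝ} (hr : 0 < r) (x : Fin n → ℝ) :
    pNorm p (r • x) = r * pNorm p x := by
  have hsum : ∑ i, |(r • x) i| ^ p = r ^ p * ∑ i, |x i| ^ p := by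
    simp only [Pi.smul_apply, smul_eq_mul, abs_mul, abs_of_pos hr, Finset.mul_sum,
      Real.mul_rpow hr.le (abs_nonneg _)]
  rw [pNorm, hsum, Real.mul_rpow (by positivity) (sum_abs_rpow_nonneg p x), one_div,
    Real.rpow_rpow_inv hr.le hp, pNorm, one_div]

lemma pNorm_zero (hp : p ≠ 0) : pNorm p (0 : Fin n → ℝ) = 0 := by
  simp [pNorm, Real.zero_rpow, hp]

lemma pNorm_pos {x : Fin n → ℝ} (hx : x ≠ 0) : 0 < pNorm p x := by
  obtain ⟨i, hi⟩ := Function.ne_iff.1 hx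
  have hterm : 0 < |x i| ^ p := Real.rpow_pos_of_pos (abs_pos.2 hi) p
  exact Real.rpow_pos_of_pos
    (Finset.sum_pos' (fun _ _ => by positivity) ⟨i, Finset.mem_univ i, hterm⟩) _

end PNorm

section RatioAGM

variable {p : ℝ} {n : ℕ}

@[fun_prop]
lemma measurable_ratioAGM (p : ℝ) : Measurable (ratioAGM p : (Fin n → ℝ) → ℝ) := by
  unfold ratioAGM
  fun_prop

lemma ratioAGM_nonneg (p : ℝ) (x : Fin n → ℝ) : 0 ≤ ratioAGM p x := by
  unfold ratioAGM
  positivity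

lemma ratioAGM_mul_pNorm [NeZero n] (hp : p ≠ 0) (x : Fin n → ℝ) :
    ratioAGM p x * pNorm p x = (n : ℝ) ^ (1 / p) * (∏ i, |x i|) ^ ((1 : ℝ) / n) := by
  rcases eq_or_ne x 0 with rfl | hx
  · simp [pNorm_zero hp, Real.zero_rpow, NeZero.ne n]
  · have hdenom : (1 / (n : ℝ) * ∑ i, |x i| ^ p) ^ (1 / p)
        = ((n : ℝ) ^ (1 / p))⁻¹ * pNorm p x := by
      rw [Real.mul_rpow (by positivity) (sum_abs_rpow_nonneg p x), one_div (n : ℝ),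
        Real.inv_rpow n.cast_nonneg, pNorm]
    have hx_pos : 0 < pNorm p x := pNorm_pos hx
    rw [ratioAGM, hdenom]
    field_simp

lemma ratioAGM_smul [NeZero n] (hp : p ≠ 0) {r : ℝ} (hr : 0 < r) (x : Fin n → ℝ) :
    ratioAGM p (r • x) = ratioAGM p x := by
  rcases eq_or_ne x 0 with rfl | hx
  · rw [smul_zero]
  have hprod : ∏ i, |(r • x) i| = r ^ n * ∏ i, |x i| := by
    simp [abs_mul, Finset.prod_mul_distrib, abs_of_pos hr]
  have hr_root : (r ^ n) ^ ((1 : ℝ) / n) = r := by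
    rw [one_div, Real.pow_rpow_inv_natCast hr.le (NeZero.ne n)]
  have hx_pos : 0 < pNorm p x := pNorm_pos hx
  refine mul_right_cancel₀ (mul_pos hr hx_pos).ne' ?_
  calc ratioAGM p (r • x) * (r * pNorm p x)
      = (n : ℝ) ^ (1 / p) * (r ^ n * ∏ i, |x i|) ^ ((1 : ℝ) / n) := by
        rw [← pNorm_smul hp hr, ratioAGM_mul_pNorm hp, hprod]
    _ = r * (ratioAGM p x * pNorm p x) := by
        rw [Real.mul_rpow (by positivity) (by positivity), hr_root, ratioAGM_mul_pNorm hp]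
        ring
    _ = ratioAGM p x * (r * pNorm p x) := mul_left_comm _ _ _

lemma ratioAGM_rpow_mul_pNorm_rpow [NeZero n] (hp : p ≠ 0) (s : ℝ) (x : Fin n → ℝ) :
    ratioAGM p x ^ (n * s) * pNorm p x ^ (n * s) = (n : ℝ) ^ (n * s / p) * ∏ i, |x i| ^ s := by
  have hn : (n : ℝ) ≠ 0 := NeZero.ne _
  rw [← Real.mul_rpow (ratioAGM_nonneg p x) (pNorm_nonneg p x), ratioAGM_mul_pNorm hp,
    Real.mul_rpow (by positivity) (by positivity), ← Real.rpow_mul n.cast_nonneg,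
    ← Real.rpow_mul (by positivity), Real.finsetProd_rpow _ _ fun _ _ => abs_nonneg _]
  congr 2 <;> field_simp

lemma ratioAGM_rpow_mul_pNorm_rpow_mul_exp [NeZero n] (hp : p ≠ 0) (s : ℝ) (x : Fin n → ℝ) :
    ratioAGM p x ^ (n * s) * (pNorm p x ^ (n * s) * Real.exp (-pNorm p x ^ p))
      = (n : ℝ) ^ (n * s / p) * ∏ i, |x i| ^ s * Real.exp (-|x i| ^ p) := by
  rw [← mul_assoc, ratioAGM_rpow_mul_pNorm_rpow hp, pNorm_rpow hp, Finset.prod_mul_distrib,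
    ← Real.exp_sum, Finset.sum_neg_distrib, mul_assoc]

end RatioAGM

section BallMoments

variable {p : ℝ} {n : ℕ}

lemma integral_prod_abs_rpow_mul_exp (hp : 0 < p) {s : ℝ} (hs : -1 < s) :
    ∫ x : Fin n → ℝ, ∏ i, |x i| ^ s * Real.exp (-|x i| ^ p)
      = (2 / p * Real.Gamma ((s + 1) / p)) ^ n := by
  rw [integral_fintype_prod_volume_eq_pow fun x : ℝ => |x| ^ s * Real.exp (-|x| ^ p),
    integral_comp_abs (f := fun x => x ^ s * Real.exp (-x ^ p)),
    integral_rpow_mul_exp_neg_rpow hp hs, Fintype.card_fin]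
  ring

lemma lintegral_prod_abs_rpow_mul_exp (hp : 0 < p) {s : ℝ} (hs : -1 < s) :
    ∫⁻ x : Fin n → ℝ, ENNReal.ofReal (∏ i, |x i| ^ s * Real.exp (-|x i| ^ p))
      = ENNReal.ofReal ((2 / p * Real.Gamma ((s + 1) / p)) ^ n) := by
  have hs' : 0 < (s + 1) / p := div_pos (by linarith) hp
  rw [← integral_prod_abs_rpow_mul_exp hp hs, ofReal_integral_eq_lintegral_ofReal]
  · refine Integrable.of_integral_ne_zero ?_
    rw [integral_prod_abs_rpow_mul_exp hp hs]
    positivity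
  · exact ae_of_all _ fun x => Finset.prod_nonneg fun i _ => by positivity

lemma lintegral_Ioi_pow_mul_rpow_mul_exp [NeZero n] (hp : 0 < p) {s : ℝ} (hs : -1 < s) :
    ∫⁻ r in Ioi (0 : ℝ), ENNReal.ofReal (r ^ (n - 1)) *
        ENNReal.ofReal (r ^ (n * s) * Real.exp (-r ^ p))
      = ENNReal.ofReal (1 / p * Real.Gamma (n * ((s + 1) / p))) := by
  have hn : (0 : ℝ) < n := Nat.cast_pos.2 (NeZero.pos n)
  have hexponent : -1 < n * (s + 1) - 1 := by
    linarith [mul_pos hn (by linarith : 0 < s + 1)]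
  have hval := integral_rpow_mul_exp_neg_rpow hp hexponent
  rw [sub_add_cancel, mul_div_assoc] at hval
  have hs' : 0 < (s + 1) / p := div_pos (by linarith) hp
  rw [← hval, ofReal_integral_eq_lintegral_ofReal]
  · refine setLIntegral_congr_fun measurableSet_Ioi fun r (hr : 0 < r) => ?_
    rw [← ENNReal.ofReal_mul (by positivity), ← mul_assoc, ← Real.rpow_natCast,
      ← Real.rpow_add hr, Nat.cast_pred (NeZero.pos n)]
    ring_nf
  · refine Integrable.of_integral_ne_zero ?_
    rw [hval]
    positivity
  · exact ae_restrict_of_forall_mem measurableSet_Ioi fun r (hr : 0 < r) => by positivity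

lemma setLIntegral_ratioAGM_rpow [NeZero n] (hp : 0 < p) {s : ℝ} (hs : -1 < s) :
    ∫⁻ x in unitBallp n p, ENNReal.ofReal (ratioAGM p x ^ (n * s))
      = ENNReal.ofReal ((n : ℝ) ^ (n * s / p) * (2 / p * Real.Gamma ((s + 1) / p)) ^ n
          / (n / p * Real.Gamma (n * ((s + 1) / p)))) := by
  have hn : (0 : ℝ) < n := Nat.cast_pos.2 (NeZero.pos n)
  have hs' : 0 < (s + 1) / p := div_pos (by linarith) hp
  have hpolar : ENNReal.ofReal ((n : ℝ) ^ (n * s / p) * (2 / p * Real.Gamma ((s + 1) / p)) ^ n)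
      = ENNReal.ofReal (n / p * Real.Gamma (n * ((s + 1) / p)))
        * ∫⁻ x in unitBallp n p, ENNReal.ofReal (ratioAGM p x ^ (n * s)) := calc
    _ = ∫⁻ x : Fin n → ℝ, ENNReal.ofReal (ratioAGM p x ^ (n * s))
          * ENNReal.ofReal (pNorm p x ^ (n * s) * Real.exp (-pNorm p x ^ p)) := by
      simp only [← ENNReal.ofReal_mul (Real.rpow_nonneg (ratioAGM_nonneg p _) _),
        ratioAGM_rpow_mul_pNorm_rpow_mul_exp hp.ne',
        ENNReal.ofReal_mul (Real.rpow_nonneg n.cast_nonneg _)]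
      rw [lintegral_const_mul' _ _ ENNReal.ofReal_ne_top, lintegral_prod_abs_rpow_mul_exp hp hs]
    _ = (n * ∫⁻ x in unitBallp n p, ENNReal.ofReal (ratioAGM p x ^ (n * s)))
          * ENNReal.ofReal (1 / p * Real.Gamma (n * ((s + 1) / p))) := by
      have hgauge := lintegral_mul_comp_gauge (volume : Measure (Fin n → ℝ)) (measurable_pNorm p)
        (fun r hr => pNorm_smul hp.ne' hr) (fun x => pNorm_pos)
        (h := fun x => ENNReal.ofReal (ratioAGM p x ^ (n * s))) (by fun_prop)
        (fun r hr x => by rw [ratioAGM_smul hp.ne' hr])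
        (φ := fun r => ENNReal.ofReal (r ^ (n * s) * Real.exp (-r ^ p))) (by fun_prop)
      rwa [Module.finrank_fin_fun, lintegral_Ioi_pow_mul_rpow_mul_exp hp hs] at hgauge
    _ = _ := by
      rw [mul_right_comm, ← ENNReal.ofReal_natCast n, ← ENNReal.ofReal_mul n.cast_nonneg,
        ← mul_assoc, mul_one_div]
  rw [ENNReal.ofReal_div_of_pos (by positivity), ENNReal.eq_div_iff
    (ENNReal.ofReal_pos.2 (by positivity)).ne' ENNReal.ofReal_ne_top, hpolar]

lemma volume_unitBallp [NeZero n] (hp : 0 < p) :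
    volume (unitBallp n p) = ENNReal.ofReal
      ((2 / p * Real.Gamma (1 / p)) ^ n / (n / p * Real.Gamma (n * (1 / p)))) := by
  simpa using setLIntegral_ratioAGM_rpow (n := n) (s := 0) hp (by norm_num)

lemma integral_ratioAGM_rpow_cond_unitBallp [NeZero n] (hp : 0 < p) {s : ℝ} (hs : -1 < s) :
    ∫ x, ratioAGM p x ^ (n * s) ∂volume[|unitBallp n p]
      = (n : ℝ) ^ (n * s / p) * (Real.Gamma ((s + 1) / p) / Real.Gamma (1 / p)) ^ n
        * (Real.Gamma (n * (1 / p)) / Real.Gamma (n * ((s + 1) / p))) := by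
  have hn : (0 : ℝ) < n := Nat.cast_pos.2 (NeZero.pos n)
  have hs' : 0 < (s + 1) / p := div_pos (by linarith) hp
  rw [ProbabilityTheory.cond, integral_smul_measure, integral_eq_lintegral_of_nonneg_ae
    (ae_of_all _ fun x => Real.rpow_nonneg (ratioAGM_nonneg p x) _)
    (by fun_prop : Measurable _).aestronglyMeasurable, setLIntegral_ratioAGM_rpow hp hs,
    volume_unitBallp hp, ENNReal.toReal_inv, ENNReal.toReal_ofReal (by positivity),
    ENNReal.toReal_ofReal (by positivity), smul_eq_mul, mul_pow, mul_pow,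
    div_pow (Real.Gamma _)]
  field_simp

lemma log_integral_ratioAGM_rpow_cond_unitBallp [NeZero n] (hp : 0 < p) {s : ℝ} (hs : -1 < s) :
    Real.log (∫ x, ratioAGM p x ^ (n * s) ∂volume[|unitBallp n p])
      = n * (stirlingRemainder ((s + 1) / p) - stirlingRemainder (1 / p))
        - (stirlingRemainder (n * ((s + 1) / p)) - stirlingRemainder (n * (1 / p))) := by
  have hn : (0 : ℝ) < n := Nat.cast_pos.2 (NeZero.pos n)
  have hs' : 0 < (s + 1) / p := div_pos (by linarith) hp
  rw [integral_ratioAGM_rpow_cond_unitBallp hp hs, Real.log_mul (by positivity) (by positivity),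
    Real.log_mul (by positivity) (by positivity), Real.log_rpow hn, Real.log_pow,
    Real.log_div (by positivity) (by positivity),
    Real.log_div (by positivity) (by positivity), log_Gamma_mul hn.ne' hs'.ne',
    log_Gamma_mul hn.ne' (one_div_ne_zero hp.ne')]
  ring

lemma tendsto_stirlingRemainder_natCast_mul_div {x : ℝ} (hx : 0 < x) :
    Tendsto (fun n : ℕ => (n : ℝ)⁻¹ * stirlingRemainder (n * x)) atTop (nhds 0) := by
  have hlim := (tendsto_stirlingRemainder_div_atTop.comp
    (tendsto_natCast_atTop_atTop.atTop_mul_const hx)).mul_const x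
  rw [zero_mul] at hlim
  refine hlim.congr fun n => ?_
  simp only [Function.comp_apply]
  field_simp

/-- The limit of `n⁻¹ log E[R_n ^ (n s)]` as `n → ∞`, where `R_n` is evaluated at a uniformly
distributed point of `B_p^n`. -/
def limitLogMoment (p s : ℝ) : ℝ := stirlingRemainder ((s + 1) / p) - stirlingRemainder (1 / p)

lemma hasExpRate_integral_ratioAGM_rpow (hp : 0 < p) {s : ℝ} (hs : -1 < s) :
    HasExpRate atTop (fun n : ℕ => (n : ℝ))
      (fun n => ∫ x, ratioAGM p x ^ (n * s) ∂volume[|unitBallp n p]) (limitLogMoment p s) := by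
  have hs' : 0 < (s + 1) / p := div_pos (by linarith) hp
  constructor
  · filter_upwards [eventually_ne_atTop 0] with n hn
    have : NeZero n := ⟨hn⟩
    rw [integral_ratioAGM_rpow_cond_unitBallp hp hs]
    positivity
  · have hlim := ((tendsto_stirlingRemainder_natCast_mul_div hs').sub
      (tendsto_stirlingRemainder_natCast_mul_div (one_div_pos.2 hp))).const_sub
      (stirlingRemainder ((s + 1) / p) - stirlingRemainder (1 / p))
    rw [sub_zero, sub_zero] at hlim
    refine hlim.congr' ?_
    filter_upwards [eventually_ne_atTop 0] with n hn
    have : NeZero n := ⟨hn⟩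
    rw [log_integral_ratioAGM_rpow_cond_unitBallp hp hs]
    field_simp

end BallMoments

section ConeMeasure

variable {p : ℝ} {n : ℕ} {A : Set (Fin n → ℝ)}

lemma measurableSet_unitBallp (n : ℕ) (p : ℝ) : MeasurableSet (unitBallp n p) :=
  measurableSet_le (measurable_pNorm p) measurable_const

lemma measurableSet_unitSpherep (n : ℕ) (p : ℝ) : MeasurableSet (unitSpherep n p) :=
  measurableSet_eq_fun (measurable_pNorm p) measurable_const

lemma coneOf_unitSpherep_inter_diff_zero (hp : p ≠ 0)
    (hA : ∀ r : ℝ, 0 < r → ∀ x, r • x ∈ A ↔ x ∈ A) :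
    coneOf (unitSpherep n p ∩ A) \ {0} = (unitBallp n p ∩ A) \ {0} := by
  ext y
  refine and_congr_left fun hy => ⟨?_, fun ⟨hyB, hyA⟩ => ?_⟩
  · rintro ⟨r, ⟨hr₀, hr₁⟩, x, ⟨hxS, hxA⟩, rfl⟩
    have hr : 0 < r := hr₀.lt_of_ne' fun h => hy (by simp [h])
    refine ⟨?_, (hA r hr x).2 hxA⟩
    rwa [unitBallp, mem_ofPred_eq, pNorm_smul hp hr, show pNorm p x = 1 from hxS, mul_one]
  · have hnorm : 0 < pNorm p y := pNorm_pos hy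
    refine ⟨pNorm p y, ⟨hnorm.le, hyB⟩, (pNorm p y)⁻¹ • y, ⟨?_, ?_⟩, ?_⟩
    · rw [unitSpherep, mem_ofPred_eq, pNorm_smul hp (inv_pos.2 hnorm), inv_mul_cancel₀ hnorm.ne']
    · exact (hA _ (inv_pos.2 hnorm) y).2 hyA
    · rw [smul_inv_smul₀ hnorm.ne']

lemma IsConeMeasure.apply_eq_cond [NeZero n] {C : Measure (Fin n → ℝ)} (hC : IsConeMeasure n p C)
    (hp : p ≠ 0) (hA_meas : MeasurableSet A)
    (hA : ∀ r : ℝ, 0 < r → ∀ x, r • x ∈ A ↔ x ∈ A) :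
    C A = volume[|unitBallp n p] A := by
  obtain ⟨-, hC_compl, hC_cone⟩ := hC
  calc C A = C (unitSpherep n p ∩ A) := (Measure.measure_inter_eq_of_ae hC_compl).symm
    _ = volume (coneOf (unitSpherep n p ∩ A)) / volume (unitBallp n p) :=
        hC_cone _ ((measurableSet_unitSpherep n p).inter hA_meas) inter_subset_left
    _ = volume (unitBallp n p ∩ A) / volume (unitBallp n p) := by
        rw [← measure_sdiff_null (measure_singleton 0), coneOf_unitSpherep_inter_diff_zero hp hA,
          measure_sdiff_null (measure_singleton 0)]
    _ = volume[|unitBallp n p] A := by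
        rw [cond_apply (measurableSet_unitBallp n p), ENNReal.div_eq_inv_mul]

lemma HasConeDirDist.measure_preimage_eq_cond [NeZero n] {Ω : Type*} [MeasurableSpace Ω]
    {P : Measure Ω} {X : Ω → Fin n → ℝ} (hX : HasConeDirDist n p P X) (hp : p ≠ 0)
    (hA_meas : MeasurableSet A) (hA : ∀ r : ℝ, 0 < r → ∀ x, r • x ∈ A ↔ x ∈ A) :
    P (X ⁻¹' A) = volume[|unitBallp n p] A := by
  obtain ⟨μR, C, hμR, hμR_Icc, hμR_zero, hC, hlaw⟩ := hX
  have : IsProbabilityMeasure C := hC.1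
  have hsmul : Measurable fun rz : ℝ × (Fin n → ℝ) => rz.1 • rz.2 := by fun_prop
  have hX_meas : AEMeasurable X P := AEMeasurable.of_map_ne_zero (by
    rw [hlaw]
    exact (Measure.isProbabilityMeasure_map hsmul.aemeasurable).ne_zero)
  have hradius_pos : ∀ᵐ r ∂μR, 0 < r := by
    filter_upwards [mem_ae_iff.2 hμR_Icc, compl_mem_ae_iff.2 hμR_zero] with r hr hr_ne
    exact hr.1.lt_of_ne' hr_ne
  calc P (X ⁻¹' A) = (μR.prod C) {rz | rz.1 • rz.2 ∈ A} := by
        rw [← Measure.map_apply_of_aemeasurable hX_meas hA_meas, hlaw,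
          Measure.map_apply hsmul hA_meas]
        rfl
    _ = ∫⁻ r, C {z | r • z ∈ A} ∂μR := Measure.prod_apply (hsmul hA_meas)
    _ = ∫⁻ _, C A ∂μR := lintegral_congr_ae (hradius_pos.mono fun r hr => by simp [hA r hr])
    _ = volume[|unitBallp n p] A := by
        rw [lintegral_const, measure_univ, mul_one, hC.apply_eq_cond hp hA_meas hA]

end ConeMeasure

section RateFunction

variable {p θ : ℝ}

lemma hasDerivAt_limitLogMoment {s : ℝ} (hs : 0 < (s + 1) / p) :
    HasDerivAt (limitLogMoment p) (Hfun ((s + 1) / p) / p) s := by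
  have hinner : HasDerivAt (fun s => (s + 1) / p) (1 / p) s :=
    ((hasDerivAt_id s).add_const 1).div_const p
  rw [← mul_one_div]
  exact ((hasDerivAt_stirlingRemainder hs).comp s hinner).sub_const _

lemma limitLogMoment_add_mul_lt (hp : 0 < p) {s t : ℝ} (hs : -1 < s) (hst : s < t) :
    limitLogMoment p s + (t - s) * (Hfun ((s + 1) / p) / p) < limitLogMoment p t := by
  have hlt := stirlingRemainder_add_mul_lt (div_pos (neg_lt_iff_pos_add.1 hs) hp)
    (by gcongr : (s + 1) / p < (t + 1) / p)
  rw [show (t + 1) / p - (s + 1) / p = (t - s) / p by ring, mul_div_left_comm] at hlt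
  rw [limitLogMoment, limitLogMoment]
  linarith

lemma mul_mConst (hp : p ≠ 0) : p * mConst p = Hfun (1 / p) := by
  rw [mConst, Hfun, Real.log_div one_ne_zero hp, Real.log_one]
  field_simp
  ring

lemma one_lt_mul_Gfun_and_Hfun_Gfun (hp : 0 < p) (hθ : θ ∈ Ioo (Real.exp (mConst p)) 1) :
    1 < p * Gfun p θ ∧ Hfun (Gfun p θ) = p * Real.log θ := by
  have hθ_pos : 0 < θ := (Real.exp_pos _).trans hθ.1
  have hlower : Hfun (1 / p) < p * Real.log θ := by
    rw [← mul_mConst hp.ne']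
    exact mul_lt_mul_of_pos_left ((Real.lt_log_iff_exp_lt hθ_pos).2 hθ.1) hp
  rw [← div_lt_iff₀' hp]
  exact lt_Hinv_and_Hfun_Hinv_eq (one_div_pos.2 hp) hlower
    (mul_neg_of_pos_of_neg hp (Real.log_neg hθ_pos hθ.2))

lemma mul_Gfun_sub_one_add_one_div (hp : p ≠ 0) (θ : ℝ) :
    (p * Gfun p θ - 1 + 1) / p = Gfun p θ := by
  rw [sub_add_cancel, mul_div_cancel_left₀ _ hp]

lemma neg_ratefn_eq (hp : p ≠ 0) (θ : ℝ) :
    -ratefn p θ = limitLogMoment p (p * Gfun p θ - 1) - (p * Gfun p θ - 1) * Real.log θ := by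
  rw [ratefn, limitLogMoment, mul_Gfun_sub_one_add_one_div hp, stirlingRemainder,
    stirlingRemainder, Real.log_div one_ne_zero hp, Real.log_one]
  ring

theorem hasExpRate_cond_unitBallp_lt_ratioAGM (hp : 0 < p)
    (hθ : θ ∈ Ioo (Real.exp (mConst p)) 1) :
    HasExpRate atTop (fun n : ℕ => (n : ℝ))
      (fun n => volume[|unitBallp n p].real {x | θ < ratioAGM p x}) (-ratefn p θ) := by
  obtain ⟨hpG, hHG⟩ := one_lt_mul_Gfun_and_Hfun_Gfun hp hθ
  have hs₀ : 0 < p * Gfun p θ - 1 := sub_pos.2 hpG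
  have hslope : Hfun ((p * Gfun p θ - 1 + 1) / p) / p = Real.log θ := by
    rw [mul_Gfun_sub_one_add_one_div hp.ne', hHG, mul_div_cancel_left₀ _ hp.ne']
  rw [neg_ratefn_eq hp.ne']
  refine hasExpRate_measureReal_lt tendsto_natCast_atTop_atTop (fun _ => measurable_ratioAGM p)
    (fun _ => ratioAGM_nonneg p) ((Real.exp_pos _).trans hθ.1) hs₀
    (fun s hs => hasExpRate_integral_ratioAGM_rpow hp (by linarith)) ?_ fun s hs => ?_
  · exact hslope ▸ hasDerivAt_limitLogMoment (div_pos (by linarith) hp)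
  · exact hslope ▸ limitLogMoment_add_mul_lt hp (by linarith) hs

end RateFunction

theorem statement5_general (p : ℝ) (hp : 0 < p)
    (Ω : ℕ → Type*) [∀ n, MeasurableSpace (Ω n)] (P : ∀ n, Measure (Ω n))
    (X : ∀ n, Ω n → Fin n → ℝ) (hX : ∀ n, 1 ≤ n → HasConeDirDist n p (P n) (X n))
    (θ : ℝ) (hθ : θ ∈ Ioo (Real.exp (mConst p)) 1) :
    Tendsto (fun n : ℕ => (n : ℝ)⁻¹ *
      Real.log (((P n) {ω | ratioAGM p (X n ω) > θ}).toReal)) atTop (nhds (-(ratefn p θ))) := by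
  refine (hasExpRate_cond_unitBallp_lt_ratioAGM hp hθ).2.congr' ?_
  filter_upwards [eventually_ne_atTop 0] with n hn
  have : NeZero n := ⟨hn⟩
  have hevent : P n {ω | ratioAGM p (X n ω) > θ} = volume[|unitBallp n p] {x | θ < ratioAGM p x} :=
    (hX n NeZero.one_le).measure_preimage_eq_cond hp.ne'
      (measurableSet_lt measurable_const (measurable_ratioAGM p))
      fun r hr x => by simp only [mem_ofPred_eq, ratioAGM_smul hp.ne' hr]
  rw [hevent, measureReal_def]

/-- for `θ ∈ (e^{m_p}, 1)`, `lim_n (1/n) log P(R_n > θ) = -I_p(θ)`. -/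
theorem statement5 (p : ℝ) (hp : 1 ≤ p)
    (Ω : ℕ → Type) [∀ n, MeasurableSpace (Ω n)]
    (P : ∀ n, Measure (Ω n)) [∀ n, IsProbabilityMeasure (P n)]
    (X : ∀ n, Ω n → Fin n → ℝ)
    (hX : ∀ n, 1 ≤ n → HasConeDirDist n p (P n) (X n))
    (θ : ℝ) (hθ : θ ∈ Ioo (Real.exp (mConst p)) 1) :
    Tendsto
      (fun n : ℕ => (n : ℝ)⁻¹ *
        Real.log (((P n) {ω | ratioAGM p (X n ω) > θ}).toReal))
      atTop (nhds (-(ratefn p θ))) :=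
  statement5_general p (one_pos.trans_le hp) Ω P X hX θ hθ
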